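/- Let n ∈ ℕ, σ ∈ {0,1}^n, and let μ_{j,m} be the Haar coefficients of the local discrepancy of the digit shifted Hammersley point set R_{n,σ} with N = 2^n points. If j = (j_1,j_2) with 0 ≤ j_1,j_2 ≤ n and j_1 + j_2 ≥ n − 1, then |μ_{j,m}| ≤ 2^{−(n+j_1+j_2+1)} for all m ∈ D_j. -/

import Mathlib

open MeasureTheory

/-- The real value of a binary digit. -/
noncomputable def bval (b : Bool) : ℝ := if b then 1 else 0

/-- The two-dimensional digit shifted Hammersley point set with `2^n` points,
indexed by the digit vectors `t : Fin n → Bool`.  The index `i : Fin n`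
corresponds to the digit `t_{i+1}` of the paper. -/
noncomputable def hammersleyShifted (n : ℕ) (σ : Fin n → Bool) (t : Fin n → Bool) : ℝ × ℝ :=
  (∑ i : Fin n, bval (t i) / 2 ^ (n - i.val),
   ∑ i : Fin n, bval (t i != σ i) / 2 ^ (i.val + 1))

/-- Number of points of the (indexed) point set `P` lying in `[0,t₁) × [0,t₂)`. -/
noncomputable def countIn {ι : Type*} [Fintype ι] (P : ι → ℝ × ℝ) (t : ℝ × ℝ) : ℕ :=
  (Finset.univ.filter
    (fun k => 0 ≤ (P k).1 ∧ (P k).1 < t.1 ∧ 0 ≤ (P k).2 ∧ (P k).2 < t.2)).card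

/-- The local discrepancy `D_N(P,t) = A_N([0,t),P)/N - t₁t₂` of an indexed point set. -/
noncomputable def localDisc {ι : Type*} [Fintype ι] (P : ι → ℝ × ℝ) (t : ℝ × ℝ) : ℝ :=
  (countIn P t : ℝ) / (Fintype.card ι) - t.1 * t.2

/-- The `L_p`-discrepancy of an indexed point set. -/
noncomputable def LpDisc (p : ℝ) {ι : Type*} [Fintype ι] (P : ι → ℝ × ℝ) : ℝ :=
  (∫ t in Set.Icc (0 : ℝ × ℝ) 1, |localDisc P t| ^ p) ^ (1 / p)

/-- One-dimensional `L∞`-normalized Haar function `h_{j,m}`, with `j ∈ ℤ`, `j = -1`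
giving the indicator of `[0,1)` and `j ≥ 0` the usual Haar function on `I_{j,m}`. -/
noncomputable def haar1 (j : ℤ) (m : ℕ) (x : ℝ) : ℝ :=
  if j = -1 then (if 0 ≤ x ∧ x < 1 then 1 else 0)
  else if (2 * m : ℝ) / 2 ^ (j.toNat + 1) ≤ x ∧ x < (2 * m + 1 : ℝ) / 2 ^ (j.toNat + 1) then 1
  else if (2 * m + 1 : ℝ) / 2 ^ (j.toNat + 1) ≤ x ∧ x < (2 * m + 2 : ℝ) / 2 ^ (j.toNat + 1) then -1
  else 0

/-- Two-dimensional (tensor product) Haar function. -/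
noncomputable def haar2 (j : ℤ × ℤ) (m : ℕ × ℕ) (x : ℝ × ℝ) : ℝ :=
  haar1 j.1 m.1 x.1 * haar1 j.2 m.2 x.2

/-- One-dimensional dyadic interval `I_{j,m}` (with `I_{-1,0} = [0,1)`). -/
noncomputable def dyadicI (j : ℤ) (m : ℕ) : Set ℝ :=
  if j = -1 then Set.Ico (0 : ℝ) 1
  else Set.Ico ((m : ℝ) / 2 ^ j.toNat) ((m + 1 : ℝ) / 2 ^ j.toNat)

/-- Haar coefficient `μ_{j,m} = ∫_{[0,1]²} D_N(P,t) h_{j,m}(t) dt` of the local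
discrepancy of an indexed point set. -/
noncomputable def haarCoeff {ι : Type*} [Fintype ι] (P : ι → ℝ × ℝ) (j : ℤ × ℤ) (m : ℕ × ℕ) : ℝ :=
  ∫ t in Set.Icc (0 : ℝ × ℝ) 1, localDisc P t * haar2 j m t

/-- Number of zero components of the shift `σ`. -/
noncomputable def zeroCount {n : ℕ} (σ : Fin n → Bool) : ℕ :=
  (Finset.univ.filter (fun j => σ j = false)).card

/-- The symmetrized digit shifted Hammersley point set `R_{n,σ} ∪ R_{n,σ⊕1}`
with `2^(n+1)` points, indexed by `Bool × (Fin n → Bool)`. -/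
noncomputable def hammersleySym (n : ℕ) (σ : Fin n → Bool) :
    Bool × (Fin n → Bool) → ℝ × ℝ :=
  fun bt => if bt.1 then hammersleyShifted n (fun i => !(σ i)) bt.2
            else hammersleyShifted n σ bt.2

/-- The multiset `R_{n,σ} ∪ {(x, 1-y) : (x,y) ∈ R_{n,σ}}` with `2^(n+1)` points
(counted with multiplicity), indexed by `Bool × (Fin n → Bool)`. -/
noncomputable def hammersleySymTilde (n : ℕ) (σ : Fin n → Bool) :
    Bool × (Fin n → Bool) → ℝ × ℝ :=
  fun bt => if bt.1 then ((hammersleyShifted n σ bt.2).1, 1 - (hammersleyShifted n σ bt.2).2)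
            else hammersleyShifted n σ bt.2

/-! The local discrepancy splits into a counting part `∑ₖ 1[x > xₖ] 1[y > yₖ] / N` and the linear
part `x y`, and both split as products over the two coordinates. The Haar coefficient of
`1[x > z]` is minus a tent function supported on `I_{j,m}` of height `2^{-(j+1)}`, so the counting
part contributes a nonnegative amount, at most `K / N · 2^{-(j₁+j₂+2)}` when `I_{j,m}` contains
`K` points. The linear part contributes exactly `4^{-(j₁+j₂+2)}`, with the opposite sign, so the
coefficient is bounded by the larger of the two.

For the Hammersley set, membership in `I_{j,m}` prescribes the first `j₁` binary digits of the
first coordinate and the first `j₂` of the second, that is, the last `j₁` and the first `j₂`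
entries of the digit vector. At most `n - (j₁ + j₂) ≤ 1` entries remain free, hence `K ≤ 2`. -/

/-- The real number `0.b₀b₁…bₙ₋₁` in binary notation. -/
noncomputable def binaryFraction {n : ℕ} (b : Fin n → Bool) : ℝ :=
  ∑ i : Fin n, bval (b i) / 2 ^ (i.val + 1)

lemma bval_eq_toNat (b : Bool) : bval b = b.toNat := by
  cases b <;> simp [bval]

lemma binaryFraction_succ {n : ℕ} (b : Fin (n + 1) → Bool) :
    binaryFraction b = (bval (b 0) + binaryFraction (Fin.tail b)) / 2 := by
  simp only [binaryFraction, Fin.sum_univ_succ, add_div, Finset.sum_div, Fin.tail, Fin.val_zero,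
    Fin.val_succ, zero_add, pow_one, pow_succ (2 : ℝ) (_ + 1), div_div]

lemma binaryFraction_nonneg {n : ℕ} (b : Fin n → Bool) : 0 ≤ binaryFraction b :=
  Finset.sum_nonneg fun i _ ↦ by rw [bval_eq_toNat]; positivity

lemma binaryFraction_lt_one {n : ℕ} (b : Fin n → Bool) : binaryFraction b < 1 := by
  induction n with
  | zero => simp [binaryFraction]
  | succ n ih =>
    have head_le_one : bval (b 0) ≤ 1 := by
      rw [bval_eq_toNat]
      exact_mod_cast (b 0).toNat_le
    rw [binaryFraction_succ]
    linarith [ih (Fin.tail b)]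

lemma odd_floor_two_pow_mul_binaryFraction {n : ℕ} (b : Fin n → Bool) (i : Fin n) :
    Odd ⌊2 ^ (i.val + 1) * binaryFraction b⌋₊ ↔ b i := by
  induction n with
  | zero => exact i.elim0
  | succ n ih =>
    rw [binaryFraction_succ, bval_eq_toNat]
    cases i using Fin.cases with
    | zero =>
      have shift : (2 : ℝ) ^ ((0 : Fin (n + 1)).val + 1) *
          (((b 0).toNat + binaryFraction (Fin.tail b)) / 2) =
          binaryFraction (Fin.tail b) + (b 0).toNat := by
        rw [Fin.val_zero]
        ring
      rw [shift, Nat.floor_add_natCast (binaryFraction_nonneg _),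
        Nat.floor_eq_zero.2 (binaryFraction_lt_one _), zero_add]
      cases b 0 <;> simp
    | succ i =>
      have shift : (2 : ℝ) ^ (i.succ.val + 1) *
          (((b 0).toNat + binaryFraction (Fin.tail b)) / 2) =
          2 ^ (i.val + 1) * binaryFraction (Fin.tail b) +
            (2 ^ (i.val + 1) * (b 0).toNat : ℕ) := by
        rw [Fin.val_succ]
        push_cast
        ring
      have even_carry : Even (2 ^ (i.val + 1) * (b 0).toNat) :=
        (Nat.even_pow.2 ⟨even_two, i.val.succ_ne_zero⟩).mul_right _
      rw [shift, Nat.floor_add_natCast (mul_nonneg (by positivity) (binaryFraction_nonneg _)),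
        Nat.odd_add, iff_true_right even_carry, ih]
      rfl

section DyadicInterval

variable {j m : ℕ}

lemma dyadicI_natCast (j m : ℕ) :
    dyadicI (j : ℤ) m = Set.Ico ((m : ℝ) / 2 ^ j) ((m + 1 : ℝ) / 2 ^ j) := by
  have natCast_ne_neg_one : (j : ℤ) ≠ -1 := by omega
  rw [dyadicI, if_neg natCast_ne_neg_one, Int.toNat_natCast]

lemma measurableSet_dyadicI (j : ℤ) (m : ℕ) : MeasurableSet (dyadicI j m) := by
  unfold dyadicI
  split_ifs <;> exact measurableSet_Ico

lemma dyadicI_subset_Icc (hm : m < 2 ^ j) : dyadicI (j : ℤ) m ⊆ Set.Icc 0 1 := by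
  have succ_le : (m : ℝ) + 1 ≤ 2 ^ j := by exact_mod_cast hm
  rw [dyadicI_natCast]
  exact Set.Ico_subset_Icc_self.trans
    (Set.Icc_subset_Icc (by positivity) (div_le_one_of_le₀ succ_le (by positivity)))

lemma floor_two_pow_mul_of_mem_dyadicI {x : ℝ} {i : ℕ} (hx : x ∈ dyadicI (j : ℤ) m)
    (hij : i ≤ j) : ⌊2 ^ i * x⌋₊ = m / 2 ^ (j - i) := by
  rw [dyadicI_natCast, Set.mem_Ico, div_le_iff₀' (by positivity), lt_div_iff₀' (by positivity)]
    at hx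
  have floor_eq : ⌊2 ^ j * x⌋₊ = m := (Nat.floor_eq_iff (m.cast_nonneg.trans hx.1)).2 hx
  have rescale : 2 ^ i * x = 2 ^ j * x / (2 ^ (j - i) : ℕ) := by
    rw [eq_div_iff (by positivity)]
    push_cast
    rw [mul_right_comm, ← pow_add, Nat.add_sub_cancel' hij]
  rw [rescale, Nat.floor_div_natCast, floor_eq]

lemma eq_of_binaryFraction_mem_dyadicI {n : ℕ} {b c : Fin n → Bool}
    (hb : binaryFraction b ∈ dyadicI (j : ℤ) m) (hc : binaryFraction c ∈ dyadicI (j : ℤ) m)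
    {i : Fin n} (hi : i.val < j) : b i = c i := by
  rw [Bool.eq_iff_iff, ← odd_floor_two_pow_mul_binaryFraction,
    ← odd_floor_two_pow_mul_binaryFraction, floor_two_pow_mul_of_mem_dyadicI hb hi,
    floor_two_pow_mul_of_mem_dyadicI hc hi]

lemma setIntegral_dyadicI_id (j m : ℕ) :
    ∫ x in dyadicI (j : ℤ) m, x = (2 * m + 1) / 2 / 4 ^ j := by
  have endpoints_le : (m : ℝ) / 2 ^ j ≤ (m + 1 : ℝ) / 2 ^ j := by gcongr; simp
  rw [dyadicI_natCast, integral_Ico_eq_integral_Ioc,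
    ← intervalIntegral.integral_of_le endpoints_le, integral_id, show (4 : ℝ) = 2 ^ 2 by norm_num,
    ← pow_mul, mul_comm 2 j, pow_mul]
  ring

lemma setIntegral_dyadicI_indicator_Ioi (j m : ℕ) (z : ℝ) :
    ∫ x in dyadicI (j : ℤ) m, (Set.Ioi z).indicator 1 x =
      max ((m + 1 : ℝ) / 2 ^ j - z) 0 - max ((m : ℝ) / 2 ^ j - z) 0 := by
  have endpoints_le : (m : ℝ) / 2 ^ j ≤ (m + 1 : ℝ) / 2 ^ j := by gcongr; simp
  rw [dyadicI_natCast, integral_Ico_eq_integral_Ioc, integral_indicator_one measurableSet_Ioi,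
    measureReal_restrict_apply measurableSet_Ioi, Set.inter_comm, Set.Ioc_inter_Ioi,
    Real.volume_real_Ioc]
  grind

end DyadicInterval

section HaarOneDim

variable {j m : ℕ} {f : ℝ → ℝ}

lemma haar1_natCast (j m : ℕ) (x : ℝ) :
    haar1 (j : ℤ) m x = (dyadicI ((j + 1 : ℕ) : ℤ) (2 * m)).indicator 1 x -
      (dyadicI ((j + 1 : ℕ) : ℤ) (2 * m + 1)).indicator 1 x := by
  have natCast_ne_neg_one : (j : ℤ) ≠ -1 := by omega
  have two_eq : (2 * m + 1 + 1 : ℝ) = 2 * m + 2 := by ring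
  simp only [haar1, if_neg natCast_ne_neg_one, dyadicI_natCast, Int.toNat_natCast, Set.indicator,
    Set.mem_Ico, Pi.one_apply]
  push_cast
  rw [two_eq]
  grind

lemma measurable_haar1 (j : ℤ) (m : ℕ) : Measurable (haar1 j m) := by
  unfold haar1
  split_ifs
  · exact .ite measurableSet_Ico measurable_const measurable_const
  · exact .ite measurableSet_Ico measurable_const
      (.ite measurableSet_Ico measurable_const measurable_const)

lemma norm_haar1_le_one (j : ℤ) (m : ℕ) (x : ℝ) : ‖haar1 j m x‖ ≤ 1 := by
  unfold haar1
  split_ifs <;> norm_num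

lemma integrableOn_mul_haar1 {s : Set ℝ} (hf : IntegrableOn f s) (j : ℤ) (m : ℕ) :
    IntegrableOn (fun x ↦ f x * haar1 j m x) s :=
  hf.mul_bdd (measurable_haar1 j m).aestronglyMeasurable (.of_forall (norm_haar1_le_one j m))

lemma setIntegral_mul_haar1 (hf : IntegrableOn f (Set.Icc 0 1)) (hm : m < 2 ^ j) :
    ∫ x in Set.Icc 0 1, f x * haar1 (j : ℤ) m x =
      (∫ x in dyadicI ((j + 1 : ℕ) : ℤ) (2 * m), f x) -
        ∫ x in dyadicI ((j + 1 : ℕ) : ℤ) (2 * m + 1), f x := by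
  have halves_subset : dyadicI ((j + 1 : ℕ) : ℤ) (2 * m) ⊆ Set.Icc 0 1 ∧
      dyadicI ((j + 1 : ℕ) : ℤ) (2 * m + 1) ⊆ Set.Icc 0 1 := by
    constructor <;> apply dyadicI_subset_Icc <;> rw [pow_succ] <;> omega
  have mul_indicator_one (s : Set ℝ) (x : ℝ) : f x * s.indicator 1 x = s.indicator f x := by
    simp [Set.indicator]
  simp only [haar1_natCast, mul_sub, mul_indicator_one]
  rw [integral_sub (hf.indicator (measurableSet_dyadicI _ _))
      (hf.indicator (measurableSet_dyadicI _ _)),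
    setIntegral_indicator (measurableSet_dyadicI _ _),
    setIntegral_indicator (measurableSet_dyadicI _ _),
    Set.inter_eq_right.2 halves_subset.1, Set.inter_eq_right.2 halves_subset.2]

lemma integrableOn_id_Icc : IntegrableOn (fun x : ℝ ↦ x) (Set.Icc 0 1) :=
  continuous_id.integrableOn_Icc

lemma integrableOn_indicator_Ioi_Icc (z : ℝ) :
    IntegrableOn ((Set.Ioi z).indicator (1 : ℝ → ℝ)) (Set.Icc 0 1) :=
  (continuous_one.integrableOn_Icc).indicator measurableSet_Ioi

lemma setIntegral_id_mul_haar1 (hm : m < 2 ^ j) :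
    ∫ x in Set.Icc 0 1, x * haar1 (j : ℤ) m x = -(1 / 4 ^ (j + 1)) := by
  rw [setIntegral_mul_haar1 integrableOn_id_Icc hm, setIntegral_dyadicI_id,
    setIntegral_dyadicI_id]
  push_cast
  ring

lemma max_sub_abs_eq_second_difference {w : ℝ} (hw : 0 ≤ w) (c z : ℝ) :
    max (w - |z - c|) 0 = max (c - w - z) 0 - 2 * max (c - z) 0 + max (c + w - z) 0 := by
  grind

/-- The tent function supported on the closure of `I_{j,m}`, with peak `2^{-(j+1)}` at the
midpoint. It is minus the Haar coefficient of `1_{(z,∞)}`, as a function of `z`. -/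
noncomputable def haarTent (j m : ℕ) (z : ℝ) : ℝ :=
  max (1 / 2 ^ (j + 1) - |z - (2 * m + 1) / 2 ^ (j + 1)|) 0

lemma haarTent_nonneg (j m : ℕ) (z : ℝ) : 0 ≤ haarTent j m z :=
  le_max_right _ _

lemma haarTent_le (j m : ℕ) (z : ℝ) : haarTent j m z ≤ 1 / 2 ^ (j + 1) :=
  max_le (sub_le_self _ (abs_nonneg _)) (by positivity)

lemma haarTent_eq_zero_of_notMem {z : ℝ} (hz : z ∉ dyadicI (j : ℤ) m) : haarTent j m z = 0 := by
  have left_eq : (m : ℝ) / 2 ^ j = (2 * m + 1) / 2 ^ (j + 1) - 1 / 2 ^ (j + 1) := by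
    rw [pow_succ]; ring
  have right_eq : (m + 1 : ℝ) / 2 ^ j = (2 * m + 1) / 2 ^ (j + 1) + 1 / 2 ^ (j + 1) := by
    rw [pow_succ]; ring
  rw [dyadicI_natCast, left_eq, right_eq] at hz
  unfold haarTent
  grind

lemma setIntegral_indicator_Ioi_mul_haar1 (hm : m < 2 ^ j) (z : ℝ) :
    ∫ x in Set.Icc 0 1, (Set.Ioi z).indicator 1 x * haar1 (j : ℤ) m x = -haarTent j m z := by
  have left_eq : (2 * m : ℝ) / 2 ^ (j + 1) = (2 * m + 1) / 2 ^ (j + 1) - 1 / 2 ^ (j + 1) := by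
    ring
  have right_eq : (2 * m + 1 + 1 : ℝ) / 2 ^ (j + 1) =
      (2 * m + 1) / 2 ^ (j + 1) + 1 / 2 ^ (j + 1) := by
    ring
  rw [setIntegral_mul_haar1 (integrableOn_indicator_Ioi_Icc z) hm,
    setIntegral_dyadicI_indicator_Ioi, setIntegral_dyadicI_indicator_Ioi, haarTent,
    max_sub_abs_eq_second_difference (by positivity)]
  push_cast
  rw [left_eq, right_eq]
  ring

end HaarOneDim

lemma volume_restrict_Icc_prod (a b : ℝ × ℝ) :
    (volume : Measure (ℝ × ℝ)).restrict (Set.Icc a b) =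
      (volume.restrict (Set.Icc a.1 b.1)).prod (volume.restrict (Set.Icc a.2 b.2)) := by
  rw [Measure.prod_restrict, ← Set.Icc_prod_eq, Measure.volume_eq_prod]

lemma mul_mul_haar2 (f g : ℝ → ℝ) (j : ℤ × ℤ) (m : ℕ × ℕ) (t : ℝ × ℝ) :
    f t.1 * g t.2 * haar2 j m t =
      (f t.1 * haar1 j.1 m.1 t.1) * (g t.2 * haar1 j.2 m.2 t.2) :=
  mul_mul_mul_comm _ _ _ _

lemma setIntegral_mul_haar2 (f g : ℝ → ℝ) (a b : ℝ × ℝ) (j : ℤ × ℤ) (m : ℕ × ℕ) :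
    ∫ t in Set.Icc a b, f t.1 * g t.2 * haar2 j m t =
      (∫ x in Set.Icc a.1 b.1, f x * haar1 j.1 m.1 x) *
        ∫ y in Set.Icc a.2 b.2, g y * haar1 j.2 m.2 y := by
  simp only [mul_mul_haar2 f g, volume_restrict_Icc_prod]
  exact integral_prod_mul (fun x ↦ f x * haar1 j.1 m.1 x) fun y ↦ g y * haar1 j.2 m.2 y

lemma integrableOn_mul_haar2 {f g : ℝ → ℝ} {a b : ℝ × ℝ}
    (hf : IntegrableOn f (Set.Icc a.1 b.1)) (hg : IntegrableOn g (Set.Icc a.2 b.2))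
    (j : ℤ × ℤ) (m : ℕ × ℕ) :
    IntegrableOn (fun t : ℝ × ℝ ↦ f t.1 * g t.2 * haar2 j m t) (Set.Icc a b) := by
  simp only [mul_mul_haar2 f g, IntegrableOn, volume_restrict_Icc_prod]
  exact (integrableOn_mul_haar1 hf j.1 m.1).mul_prod (integrableOn_mul_haar1 hg j.2 m.2)

section HaarCoefficient

variable {ι : Type*} [Fintype ι] {P : ι → ℝ × ℝ}

lemma countIn_eq_sum_indicator (hP : ∀ k, 0 ≤ P k) (t : ℝ × ℝ) :
    (countIn P t : ℝ) =
      ∑ k, (Set.Ioi (P k).1).indicator 1 t.1 * (Set.Ioi (P k).2).indicator 1 t.2 := by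
  rw [countIn, Finset.card_filter, Nat.cast_sum]
  refine Finset.sum_congr rfl fun k _ ↦ ?_
  have fst_nonneg : 0 ≤ (P k).1 := (hP k).1
  have snd_nonneg : 0 ≤ (P k).2 := (hP k).2
  simp only [fst_nonneg, snd_nonneg, true_and, Set.indicator, Set.mem_Ioi, Pi.one_apply]
  push_cast
  grind

lemma localDisc_mul_haar2 (hP : ∀ k, 0 ≤ P k) (j : ℤ × ℤ) (m : ℕ × ℕ) (t : ℝ × ℝ) :
    localDisc P t * haar2 j m t =
      (∑ k, (Set.Ioi (P k).1).indicator 1 t.1 * (Set.Ioi (P k).2).indicator 1 t.2 *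
        haar2 j m t) / Fintype.card ι - t.1 * t.2 * haar2 j m t := by
  rw [localDisc, countIn_eq_sum_indicator hP, sub_mul, div_mul_eq_mul_div, Finset.sum_mul]

lemma haarCoeff_eq_sum_haarTent (hP : ∀ k, 0 ≤ P k) {j1 j2 m1 m2 : ℕ} (hm1 : m1 < 2 ^ j1)
    (hm2 : m2 < 2 ^ j2) :
    haarCoeff P ((j1 : ℤ), (j2 : ℤ)) (m1, m2) =
      (∑ k, haarTent j1 m1 (P k).1 * haarTent j2 m2 (P k).2) / Fintype.card ι -
        1 / 4 ^ (j1 + j2 + 2) := by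
  have integrable_count (k : ι) :=
    integrableOn_mul_haar2 (a := 0) (b := 1) (integrableOn_indicator_Ioi_Icc (P k).1)
      (integrableOn_indicator_Ioi_Icc (P k).2) ((j1 : ℤ), (j2 : ℤ)) (m1, m2)
  have integrable_area := integrableOn_mul_haar2 (a := 0) (b := 1) integrableOn_id_Icc
    integrableOn_id_Icc ((j1 : ℤ), (j2 : ℤ)) (m1, m2)
  have integral_count (k : ι) := setIntegral_mul_haar2 ((Set.Ioi (P k).1).indicator 1)
    ((Set.Ioi (P k).2).indicator 1) 0 1 ((j1 : ℤ), (j2 : ℤ)) (m1, m2)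
  have integral_area := setIntegral_mul_haar2 (fun x ↦ x) (fun y ↦ y) 0 1
    ((j1 : ℤ), (j2 : ℤ)) (m1, m2)
  simp only [Prod.fst_zero, Prod.fst_one, Prod.snd_zero, Prod.snd_one,
    setIntegral_indicator_Ioi_mul_haar1 hm1, setIntegral_indicator_Ioi_mul_haar1 hm2,
    setIntegral_id_mul_haar1 hm1, setIntegral_id_mul_haar1 hm2, neg_mul_neg]
    at integral_count integral_area
  simp only [haarCoeff, localDisc_mul_haar2 hP]
  rw [integral_sub ((integrable_finsetSum _ fun k _ ↦ integrable_count k).div_const _)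
      integrable_area, integral_div, integral_finsetSum _ fun k _ ↦ integrable_count k,
    Finset.sum_congr rfl fun k _ ↦ integral_count k, integral_area]
  ring

/-- The dyadic box `I_{j,m} = I_{j₁,m₁} × I_{j₂,m₂}`. -/
def dyadicBox (j : ℤ × ℤ) (m : ℕ × ℕ) : Set (ℝ × ℝ) :=
  dyadicI j.1 m.1 ×ˢ dyadicI j.2 m.2

lemma sum_haarTent_mul_haarTent_le (P : ι → ℝ × ℝ) (j1 j2 m1 m2 : ℕ) :
    ∑ k, haarTent j1 m1 (P k).1 * haarTent j2 m2 (P k).2 ≤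
      (P ⁻¹' dyadicBox ((j1 : ℤ), (j2 : ℤ)) (m1, m2)).ncard / 2 ^ (j1 + j2 + 2) := by
  classical
  let inBox := P ⁻¹' dyadicBox ((j1 : ℤ), (j2 : ℤ)) (m1, m2)
  have term_le (k : ι) : haarTent j1 m1 (P k).1 * haarTent j2 m2 (P k).2 ≤
      if k ∈ inBox then 1 / 2 ^ (j1 + j2 + 2) else 0 := by
    split_ifs with hk
    · calc haarTent j1 m1 (P k).1 * haarTent j2 m2 (P k).2
          ≤ 1 / 2 ^ (j1 + 1) * (1 / 2 ^ (j2 + 1)) :=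
            mul_le_mul (haarTent_le ..) (haarTent_le ..) (haarTent_nonneg ..) (by positivity)
        _ = 1 / 2 ^ (j1 + j2 + 2) := by ring
    · rcases not_and_or.1 hk with hk | hk <;> simp [haarTent_eq_zero_of_notMem hk]
  calc ∑ k, haarTent j1 m1 (P k).1 * haarTent j2 m2 (P k).2
      ≤ ∑ k, if k ∈ inBox then 1 / 2 ^ (j1 + j2 + 2) else (0 : ℝ) :=
        Finset.sum_le_sum fun k _ ↦ term_le k
    _ = inBox.ncard / 2 ^ (j1 + j2 + 2) := by
        rw [← Finset.sum_filter, Finset.sum_const, Set.filter_mem_univ_eq_toFinset,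
          ← Set.ncard_eq_toFinset_card', nsmul_eq_mul, mul_one_div]

theorem abs_haarCoeff_le_max (hP : ∀ k, 0 ≤ P k) {j1 j2 m1 m2 : ℕ} (hm1 : m1 < 2 ^ j1)
    (hm2 : m2 < 2 ^ j2) :
    |haarCoeff P ((j1 : ℤ), (j2 : ℤ)) (m1, m2)| ≤
      max ((P ⁻¹' dyadicBox ((j1 : ℤ), (j2 : ℤ)) (m1, m2)).ncard / 2 ^ (j1 + j2 + 2) /
        Fintype.card ι : ℝ) (1 / 4 ^ (j1 + j2 + 2)) := by
  have sum_nonneg : 0 ≤ ∑ k, haarTent j1 m1 (P k).1 * haarTent j2 m2 (P k).2 :=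
    Finset.sum_nonneg fun k _ ↦ mul_nonneg (haarTent_nonneg ..) (haarTent_nonneg ..)
  have count_le := div_le_div_of_nonneg_right (sum_haarTent_mul_haarTent_le P j1 j2 m1 m2)
    (Fintype.card ι).cast_nonneg
  rw [haarCoeff_eq_sum_haarTent hP hm1 hm2]
  refine (abs_sub_le_max_sub (div_nonneg sum_nonneg (Fintype.card ι).cast_nonneg) count_le
    (1 / 4 ^ (j1 + j2 + 2))).trans (max_le_max (sub_le_self _ (by positivity)) ?_)
  rw [sub_zero]

end HaarCoefficient

section Hammersley

variable {n : ℕ} (σ : Fin n → Bool)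

lemma hammersleyShifted_fst (t : Fin n → Bool) :
    (hammersleyShifted n σ t).1 = binaryFraction fun i ↦ t i.rev := by
  simp only [hammersleyShifted, binaryFraction]
  rw [← Equiv.sum_comp Fin.revPerm]
  refine Finset.sum_congr rfl fun i _ ↦ ?_
  rw [Fin.revPerm_apply, Fin.val_rev, Nat.sub_sub_self i.isLt]

lemma hammersleyShifted_snd (t : Fin n → Bool) :
    (hammersleyShifted n σ t).2 = binaryFraction fun i ↦ t i != σ i :=
  rfl

lemma hammersleyShifted_nonneg (t : Fin n → Bool) : 0 ≤ hammersleyShifted n σ t :=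
  ⟨(binaryFraction_nonneg _).trans_eq (hammersleyShifted_fst σ t).symm, binaryFraction_nonneg _⟩

theorem ncard_hammersleyShifted_preimage_dyadicBox_le (j1 j2 : ℕ) (m : ℕ × ℕ) :
    (hammersleyShifted n σ ⁻¹' dyadicBox ((j1 : ℤ), (j2 : ℤ)) m).ncard ≤
      2 ^ (n - (j1 + j2)) := by
  let freeDigits (t : Fin n → Bool) (i : Fin (n - (j1 + j2))) : Bool := t ⟨j2 + i, by omega⟩
  have freeDigits_injOn :
      Set.InjOn freeDigits (hammersleyShifted n σ ⁻¹' dyadicBox ((j1 : ℤ), (j2 : ℤ)) m) := by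
    rintro t ⟨ht1, ht2⟩ u ⟨hu1, hu2⟩ free_eq
    rw [hammersleyShifted_fst] at ht1 hu1
    rw [hammersleyShifted_snd] at ht2 hu2
    funext i
    by_cases low : i.val < j2
    · simpa using eq_of_binaryFraction_mem_dyadicI ht2 hu2 low
    by_cases high : i.rev.val < j1
    · simpa using eq_of_binaryFraction_mem_dyadicI ht1 hu1 high
    rw [Fin.val_rev] at high
    simpa [freeDigits, Nat.add_sub_cancel' (not_lt.1 low)] using
      congrFun free_eq ⟨i.val - j2, by omega⟩
  simpa [Set.ncard_univ] using
    Set.ncard_le_ncard_of_injOn freeDigits (fun _ _ ↦ Set.mem_univ _) freeDigits_injOn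

end Hammersley

theorem statement5_general (n : ℕ) (σ : Fin n → Bool) (j1 j2 : ℕ) (hj : n ≤ j1 + j2 + 1)
    (m1 m2 : ℕ) (hm1 : m1 < 2 ^ j1) (hm2 : m2 < 2 ^ j2) :
    |haarCoeff (hammersleyShifted n σ) ((j1 : ℤ), (j2 : ℤ)) (m1, m2)| ≤
      1 / 2 ^ (n + j1 + j2 + 1) := by
  have ncard_le_two :
      (hammersleyShifted n σ ⁻¹' dyadicBox ((j1 : ℤ), (j2 : ℤ)) (m1, m2)).ncard ≤ 2 :=
    (ncard_hammersleyShifted_preimage_dyadicBox_le σ j1 j2 (m1, m2)).trans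
      (Nat.pow_le_pow_right two_pos (by omega : n - (j1 + j2) ≤ 1))
  refine (abs_haarCoeff_le_max (hammersleyShifted_nonneg σ) hm1 hm2).trans (max_le ?_ ?_)
  · have card_eq : (Fintype.card (Fin n → Bool) : ℝ) = 2 ^ n := by simp
    rw [card_eq]
    calc _ ≤ (2 : ℝ) / 2 ^ (j1 + j2 + 2) / 2 ^ n := by
          gcongr
          exact_mod_cast ncard_le_two
      _ = 1 / 2 ^ (n + j1 + j2 + 1) := by
          field_simp
          ring
  · rw [show (4 : ℝ) = 2 ^ 2 by norm_num, ← pow_mul]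
    gcongr
    · norm_num
    · omega

/-- Haar coefficients of the local discrepancy of `R_{n,σ}` for `0 ≤ j₁, j₂ ≤ n`
with `j₁ + j₂ ≥ n - 1`: `|μ_{j,m}| ≤ 2^{-(n+j₁+j₂+1)}`. -/
theorem statement5 (n : ℕ) (hn : 0 < n) (σ : Fin n → Bool)
    (j1 j2 : ℕ) (hj1 : j1 ≤ n) (hj2 : j2 ≤ n) (hj : n ≤ j1 + j2 + 1)
    (m1 m2 : ℕ) (hm1 : m1 < 2 ^ j1) (hm2 : m2 < 2 ^ j2) :
    |haarCoeff (hammersleyShifted n σ) ((j1 : ℤ), (j2 : ℤ)) (m1, m2)| ≤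
      1 / 2 ^ (n + j1 + j2 + 1) :=
  statement5_general n σ j1 j2 hj m1 m2 hm1 hm2
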